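/- arXiv:1306.0435 — 4 statements merged into one kernel-verified Lean document; each statement's English description precedes it below -/
import Mathlib

section
/- For every 1 ≤ p < ∞, the set C^∞(ℝ) ∩ L^p_unif(ℝ) is dense in the Stepanov space L^p_unif(ℝ): for every f ∈ L^p_unif(ℝ) and every ε > 0 there exists a smooth function g ∈ C^∞(ℝ) with finite Stepanov norm such that ‖f − g‖_{L^p_unif(ℝ)} < ε. Moreover, if f is real-valued then g can be chosen real-valued. -/
open MeasureTheory

open Filter Metric Topology
open scoped ContDiff ENNReal Manifold

/-!
A locally `L^p` function `f` can be approximated by a smooth function in the *global* `L^p` norm,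
even if `f` itself is not in `L^p`: given a smooth partition of unity `ρ n` with bounded supports,
choose smooth `h n` with `‖f - h n‖_p ≤ δ n` near the support of `ρ n`, where `∑ δ n < ε`, and put
`g = ∑ ρ n • h n`. Then `f - g = ∑ ρ n • (f - h n)` has `L^p` norm less than `ε`. Since the
Stepanov norm is dominated by the `L^p` norm, `g` is also close to `f` in the Stepanov norm.
Running this construction inside the real span of the values of `f` keeps `g` real-valued
when `f` is.
-/

section General

variable {α F : Type*} {m : MeasurableSpace α} {μ : Measure α} [NormedAddCommGroup F]

theorem eLpNorm_le_tsum_of_hasSum {p : ℝ≥0∞} (hp : 1 ≤ p) {u : ℕ → α → F} {v : α → F}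
    (hu : ∀ n, AEStronglyMeasurable (u n) μ) (huv : ∀ᵐ x ∂μ, HasSum (fun n => u n x) (v x)) :
    eLpNorm v p μ ≤ ∑' n, eLpNorm (u n) p μ := by
  have partialSums_tendsto : ∀ᵐ x ∂μ,
      Tendsto (fun N => (∑ n ∈ Finset.range N, u n) x) atTop (𝓝 (v x)) := by
    filter_upwards [huv] with x hx
    simpa only [Finset.sum_apply] using hx.tendsto_sum_nat
  calc eLpNorm v p μ
      ≤ liminf (fun N => eLpNorm (∑ n ∈ Finset.range N, u n) p μ) atTop :=
        Lp.eLpNorm_lim_le_liminf_eLpNorm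
          (fun N => Finset.aestronglyMeasurable_sum _ fun n _ => hu n) v partialSums_tendsto
    _ ≤ ∑' n, eLpNorm (u n) p μ :=
        liminf_le_of_frequently_le' <| .of_forall fun N =>
          (eLpNorm_sum_le (fun n _ => hu n) hp).trans (ENNReal.sum_le_tsum _)

theorem eLpNorm_smul_le_eLpNorm_restrict {𝕜 : Type*} [NormedField 𝕜] [NormedSpace 𝕜 F]
    {p : ℝ≥0∞} {φ : α → 𝕜} {s : Set α} (hs : MeasurableSet s) (hφ_le : ∀ x, ‖φ x‖ ≤ 1)
    (hφ_supp : Function.support φ ⊆ s) (u : α → F) :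
    eLpNorm (fun x => φ x • u x) p μ ≤ eLpNorm u p (μ.restrict s) := by
  rw [← eLpNorm_indicator_eq_eLpNorm_restrict hs]
  refine eLpNorm_mono fun x => ?_
  by_cases hx : x ∈ s
  · rw [Set.indicator_of_mem hx, norm_smul]
    exact mul_le_of_le_one_left (norm_nonneg _) (hφ_le x)
  · have hφx : φ x = 0 := Function.notMem_support.1 fun h => hx (hφ_supp h)
    simp [hφx]

theorem eLpNorm_le_ofReal_iff_integral_le_rpow {p : ℝ} (hp : 0 < p) {C : ℝ} (hC : 0 ≤ C)
    {f : α → F} (hf : MemLp f (.ofReal p) μ) :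
    eLpNorm f (.ofReal p) μ ≤ .ofReal C ↔ ∫ x, ‖f x‖ ^ p ∂μ ≤ C ^ p := by
  rw [hf.eLpNorm_eq_integral_rpow_norm (by simpa using hp) ENNReal.ofReal_ne_top,
    ENNReal.toReal_ofReal hp.le, ENNReal.ofReal_le_ofReal_iff hC,
    Real.rpow_inv_le_iff_of_pos (by positivity) hC hp]

theorem memLp_subtype_coe_comp_iff {R : Type*} [Ring R] [Module R F] {p : ℝ≥0∞}
    {V : Submodule R F} {f : α → V} :
    MemLp (fun x => (f x : F)) p μ ↔ MemLp f p μ := by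
  have hmeas := (Topology.IsEmbedding.subtypeVal (p := (· ∈ V))).aestronglyMeasurable_comp_iff
    (f := f) (μ := μ)
  have hnorm : eLpNorm (fun x => (f x : F)) p μ = eLpNorm f p μ :=
    eLpNorm_congr_norm_ae (.of_forall fun _ => rfl)
  rw [MemLp, MemLp, hnorm, ← hmeas]

theorem aestronglyMeasurable_of_forall_isCompact_memLp [TopologicalSpace α] [SigmaCompactSpace α]
    {p : ℝ≥0∞} {f : α → F}
    (hf : ∀ K, IsCompact K → MemLp f p (μ.restrict K)) : AEStronglyMeasurable f μ := by
  have := aestronglyMeasurable_iUnion_iff.2 fun n =>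
    (hf _ (isCompact_compactCovering α n)).aestronglyMeasurable
  rwa [iUnion_compactCovering, Measure.restrict_univ] at this

theorem memLp_restrict_of_locallyIntegrable_norm_rpow [TopologicalSpace α] {p : ℝ} (hp : 0 < p)
    {f : α → F} (hf : AEStronglyMeasurable f μ)
    (hf_loc : LocallyIntegrable (fun x => ‖f x‖ ^ p) μ) (K : Set α) (hK : IsCompact K) :
    MemLp f (.ofReal p) (μ.restrict K) := by
  rw [← integrable_norm_rpow_iff hf.restrict (by simpa using hp) ENNReal.ofReal_ne_top,
    ENNReal.toReal_ofReal hp.le]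
  exact hf_loc.integrableOn_isCompact hK

theorem hasSum_partitionOfUnity_smul_sub {ι X : Type*} [TopologicalSpace X] [NormedSpace ℝ F]
    {s : Set X} (ρ : PartitionOfUnity ι X s) {x : X} (hx : x ∈ s) (v : F) (w : ι → F) :
    HasSum (fun i => ρ i x • (v - w i)) (v - ∑ᶠ i, ρ i x • w i) := by
  have hsum : ∑ i ∈ ρ.finsupport x, ρ i x • (v - w i) = v - ∑ᶠ i, ρ i x • w i := by
    simp only [smul_sub, Finset.sum_sub_distrib, ← Finset.sum_smul, ρ.sum_finsupport hx, one_smul,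
      ρ.sum_finsupport_smul_eq_finsum fun i _ => w i]
  rw [← hsum]
  refine hasSum_sum_of_ne_finset_zero fun i hi => ?_
  have hρ : ρ i x = 0 := by simpa using hi
  rw [hρ, zero_smul]

end General

section SmoothApproximation

theorem exists_smoothPartitionOfUnity_subordinate_ball (E : Type*) [NormedAddCommGroup E]
    [NormedSpace ℝ E] [FiniteDimensional ℝ E] :
    ∃ ρ : SmoothPartitionOfUnity ℕ 𝓘(ℝ, E) E,
      ρ.IsSubordinate fun n => ball (0 : E) (n + 1) := by
  refine SmoothPartitionOfUnity.exists_isSubordinate _ isClosed_univ _ (fun _ => isOpen_ball) ?_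
  intro x _
  obtain ⟨n, hn⟩ := exists_nat_gt ‖x‖
  exact Set.mem_iUnion.2 ⟨n, mem_ball_zero_iff.2 (hn.trans (lt_add_one _))⟩

variable {E F : Type*} [NormedAddCommGroup E] [NormedSpace ℝ E] [FiniteDimensional ℝ E]
  [MeasurableSpace E] [BorelSpace E] [NormedAddCommGroup F] [NormedSpace ℝ F]
  {μ : Measure E} [IsFiniteMeasureOnCompacts μ] {p : ℝ≥0∞}

theorem exists_contDiff_eLpNorm_sub_lt (hp : 1 ≤ p) (hp_top : p ≠ ⊤) {f : E → F}
    (hf : ∀ K, IsCompact K → MemLp f p (μ.restrict K)) {ε : ℝ≥0∞} (hε : ε ≠ 0) :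
    ∃ g : E → F, ContDiff ℝ ∞ g ∧ eLpNorm (f - g) p μ < ε := by
  obtain ⟨δ, hδ_pos, hδ_sum⟩ := ENNReal.exists_pos_sum_of_countable hε ℕ
  have local_approx : ∀ n : ℕ, ∃ h : E → F, ContDiff ℝ ∞ h ∧
      eLpNorm (f - h) p (μ.restrict (closedBall 0 (n + 1))) ≤ δ n := fun n => by
    obtain ⟨h, -, h_smooth, h_le⟩ :=
      (hf _ (isCompact_closedBall 0 ((n : ℝ) + 1))).exist_eLpNorm_sub_le
        hp_top hp (NNReal.coe_pos.2 (hδ_pos n))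
    exact ⟨h, h_smooth, by simpa using h_le⟩
  choose h h_smooth h_le using local_approx
  obtain ⟨ρ, hρ⟩ := exists_smoothPartitionOfUnity_subordinate_ball E
  have term_le (n : ℕ) : eLpNorm (fun x => ρ n x • (f x - h n x)) p μ ≤ δ n :=
    (eLpNorm_smul_le_eLpNorm_restrict measurableSet_closedBall
      (fun x => by simpa [abs_of_nonneg (ρ.nonneg n x)] using ρ.le_one n x)
      ((subset_tsupport _).trans ((hρ n).trans ball_subset_closedBall)) _).trans (h_le n)
  refine ⟨fun x => ∑ᶠ n, ρ n x • h n x, ?_, ?_⟩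
  · exact (ρ.contMDiff_finsum_smul fun n x _ => (h_smooth n).contMDiff.contMDiffAt).contDiff
  · calc eLpNorm (f - fun x => ∑ᶠ n, ρ n x • h n x) p μ
        ≤ ∑' n, eLpNorm (fun x => ρ n x • (f x - h n x)) p μ := by
          refine eLpNorm_le_tsum_of_hasSum hp (fun n => ?_) (.of_forall fun x =>
            hasSum_partitionOfUnity_smul_sub ρ.toPartitionOfUnity (Set.mem_univ x) (f x) (h · x))
          exact (ρ n).contMDiff.continuous.aestronglyMeasurable.smul
            ((aestronglyMeasurable_of_forall_isCompact_memLp hf).sub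
              (h_smooth n).continuous.aestronglyMeasurable)
      _ ≤ ∑' n, (δ n : ℝ≥0∞) := ENNReal.tsum_le_tsum term_le
      _ < ε := hδ_sum

theorem exists_contDiff_mem_span_eLpNorm_sub_lt (hp : 1 ≤ p) (hp_top : p ≠ ⊤) {f : E → F}
    (hf : ∀ K, IsCompact K → MemLp f p (μ.restrict K)) {ε : ℝ≥0∞} (hε : ε ≠ 0) :
    ∃ g : E → F, ContDiff ℝ ∞ g ∧ eLpNorm (f - g) p μ < ε ∧
      ∀ x, g x ∈ Submodule.span ℝ (Set.range f) := by
  let V := Submodule.span ℝ (Set.range f)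
  let fV : E → V := fun x => ⟨f x, Submodule.subset_span (Set.mem_range_self x)⟩
  obtain ⟨g, g_smooth, g_lt⟩ := exists_contDiff_eLpNorm_sub_lt (f := fV) hp hp_top
    (fun K hK => memLp_subtype_coe_comp_iff.1 (hf K hK)) hε
  refine ⟨fun x => g x, V.subtypeL.contDiff.comp g_smooth, ?_, fun x => (g x).2⟩
  calc eLpNorm (f - fun x => (g x : F)) p μ = eLpNorm (fV - g) p μ :=
        eLpNorm_congr_norm_ae (.of_forall fun _ => rfl)
    _ < ε := g_lt

end SmoothApproximation

section Stepanov

variable {F : Type*} [NormedAddCommGroup F]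

/-- The Stepanov norm of `f` as an extended nonnegative real, so that it is meaningful
(possibly `∞`) without local integrability or boundedness assumptions. -/
noncomputable def stepanovENorm (f : ℝ → F) (p : ℝ≥0∞) : ℝ≥0∞ :=
  ⨆ t : ℝ, eLpNorm f p (volume.restrict (Set.Ioc t (t + 1)))

theorem stepanovENorm_le_eLpNorm (f : ℝ → F) (p : ℝ≥0∞) :
    stepanovENorm f p ≤ eLpNorm f p volume :=
  iSup_le fun _ => eLpNorm_mono_measure f Measure.restrict_le_self

theorem stepanovENorm_sub_le {p : ℝ≥0∞} (hp : 1 ≤ p) {f g : ℝ → F}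
    (hf : AEStronglyMeasurable f) (hg : AEStronglyMeasurable g) :
    stepanovENorm (f - g) p ≤ stepanovENorm f p + stepanovENorm g p :=
  iSup_le fun t => (eLpNorm_sub_le hf.restrict hg.restrict hp).trans <|
    add_le_add (le_iSup (fun t => eLpNorm f p (volume.restrict (Set.Ioc t (t + 1)))) t)
      (le_iSup (fun t => eLpNorm g p (volume.restrict (Set.Ioc t (t + 1)))) t)

theorem stepanovENorm_le_ofReal_iff {p : ℝ} (hp : 0 < p) {C : ℝ} (hC : 0 ≤ C) {f : ℝ → F}
    (hf : ∀ K, IsCompact K → MemLp f (.ofReal p) (volume.restrict K)) :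
    stepanovENorm f (.ofReal p) ≤ .ofReal C ↔ ∀ t : ℝ, ∫ s in t..(t + 1), ‖f s‖ ^ p ≤ C ^ p := by
  refine iSup_le_iff.trans (forall_congr' fun t => ?_)
  have hft : MemLp f (.ofReal p) (volume.restrict (Set.Ioc t (t + 1))) :=
    (hf _ isCompact_Icc).mono_measure (Measure.restrict_mono Set.Ioc_subset_Icc_self le_rfl)
  rw [eLpNorm_le_ofReal_iff_integral_le_rpow hp hC hft,
    intervalIntegral.integral_of_le (le_add_of_nonneg_right zero_le_one)]

theorem bddAbove_range_integral_iff_stepanovENorm_ne_top {p : ℝ} (hp : 0 < p) {f : ℝ → F}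
    (hf : ∀ K, IsCompact K → MemLp f (.ofReal p) (volume.restrict K)) :
    BddAbove (Set.range fun t : ℝ => ∫ s in t..(t + 1), ‖f s‖ ^ p) ↔
      stepanovENorm f (.ofReal p) ≠ ⊤ := by
  constructor
  · rintro ⟨B, hB⟩
    have hB_nonneg : 0 ≤ B := le_trans
      (intervalIntegral.integral_nonneg (by norm_num) fun _ _ => by positivity) (hB ⟨0, rfl⟩)
    refine ne_top_of_le_ne_top ENNReal.ofReal_ne_top
      ((stepanovENorm_le_ofReal_iff hp (C := B ^ p⁻¹) (by positivity) hf).2 fun t => ?_)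
    rw [Real.rpow_inv_rpow hB_nonneg hp.ne']
    exact hB ⟨t, rfl⟩
  · intro h
    refine ⟨(stepanovENorm f (.ofReal p)).toReal ^ p, Set.forall_mem_range.2 ?_⟩
    exact (stepanovENorm_le_ofReal_iff hp ENNReal.toReal_nonneg hf).1 (ENNReal.ofReal_toReal h).ge

theorem iSup_integral_rpow_le_of_stepanovENorm_le {p : ℝ} (hp : 0 < p) {C : ℝ} (hC : 0 ≤ C)
    {f : ℝ → F} (hf : ∀ K, IsCompact K → MemLp f (.ofReal p) (volume.restrict K))
    (hfC : stepanovENorm f (.ofReal p) ≤ .ofReal C) :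
    (⨆ t : ℝ, ∫ s in t..(t + 1), ‖f s‖ ^ p) ^ (1 / p) ≤ C := by
  have integral_rpow_nonneg (t : ℝ) : 0 ≤ ∫ s in t..(t + 1), ‖f s‖ ^ p :=
    intervalIntegral.integral_nonneg (by linarith) fun _ _ => by positivity
  rw [one_div, Real.rpow_inv_le_iff_of_pos (Real.iSup_nonneg integral_rpow_nonneg) hC hp]
  exact ciSup_le ((stepanovENorm_le_ofReal_iff hp hC hf).1 hfC)

theorem smooth_dense_in_stepanov_general [NormedSpace ℝ F] {p : ℝ} (hp : 1 ≤ p) {f : ℝ → F}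
    (hf_meas : AEStronglyMeasurable f)
    (hf_loc : LocallyIntegrable fun s => ‖f s‖ ^ p)
    (hf_bdd : BddAbove (Set.range fun t : ℝ => ∫ s in t..(t + 1), ‖f s‖ ^ p))
    {ε : ℝ} (hε : 0 < ε) :
    ∃ g : ℝ → F, ContDiff ℝ ∞ g ∧
      BddAbove (Set.range fun t : ℝ => ∫ s in t..(t + 1), ‖g s‖ ^ p) ∧
      (⨆ t : ℝ, ∫ s in t..(t + 1), ‖f s - g s‖ ^ p) ^ (1 / p) < ε ∧
      ∀ x, g x ∈ Submodule.span ℝ (Set.range f) := by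
  have hp_pos : 0 < p := by linarith
  have one_le_p : 1 ≤ ENNReal.ofReal p := ENNReal.one_le_ofReal.2 hp
  have f_memLp := memLp_restrict_of_locallyIntegrable_norm_rpow hp_pos hf_meas hf_loc
  obtain ⟨g, g_smooth, fg_lt, g_span⟩ := exists_contDiff_mem_span_eLpNorm_sub_lt one_le_p
    ENNReal.ofReal_ne_top f_memLp (ENNReal.ofReal_pos.2 (half_pos hε)).ne'
  have fg_meas := hf_meas.sub g_smooth.continuous.aestronglyMeasurable
  have fg_memLp : MemLp (f - g) (.ofReal p) := ⟨fg_meas, fg_lt.trans ENNReal.ofReal_lt_top⟩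
  have fg_le : stepanovENorm (f - g) (.ofReal p) ≤ .ofReal (ε / 2) :=
    (stepanovENorm_le_eLpNorm _ _).trans fg_lt.le
  refine ⟨g, g_smooth, ?_, ?_, g_span⟩
  · have g_memLp (K : Set ℝ) (hK : IsCompact K) : MemLp g (.ofReal p) (volume.restrict K) :=
      sub_sub_cancel f g ▸ (f_memLp K hK).sub (fg_memLp.restrict K)
    rw [bddAbove_range_integral_iff_stepanovENorm_ne_top hp_pos f_memLp] at hf_bdd
    rw [bddAbove_range_integral_iff_stepanovENorm_ne_top hp_pos g_memLp,
      ← sub_sub_cancel f g]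
    exact ne_top_of_le_ne_top
      (ENNReal.add_ne_top.2 ⟨hf_bdd, ne_top_of_le_ne_top ENNReal.ofReal_ne_top fg_le⟩)
      (stepanovENorm_sub_le one_le_p hf_meas fg_meas)
  · exact (iSup_integral_rpow_le_of_stepanovENorm_le hp_pos (half_pos hε).le
      (fun K _ => fg_memLp.restrict K) fg_le).trans_lt (half_lt_self hε)

end Stepanov

/-- **Density of smooth functions in the Stepanov space `L^p_unif(ℝ)`.**
For every `1 ≤ p < ∞`, every locally `p`-integrable `f : ℝ → ℂ` with finite Stepanov norm
and every `ε > 0` there is a smooth `g` with finite Stepanov norm such that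
`‖f - g‖_{L^p_unif} < ε`; moreover if `f` is real-valued then `g` can be chosen real-valued. -/
theorem smooth_dense_in_stepanov (p : ℝ) (hp : 1 ≤ p) (f : ℝ → ℂ)
    (hf_meas : AEStronglyMeasurable f volume)
    (hf_loc : LocallyIntegrable (fun s => ‖f s‖ ^ p) volume)
    (hf_bdd : BddAbove (Set.range fun t : ℝ => ∫ s in t..(t + 1), ‖f s‖ ^ p))
    (ε : ℝ) (hε : 0 < ε) :
    ∃ g : ℝ → ℂ, ContDiff ℝ (⊤ : ℕ∞) g ∧
      BddAbove (Set.range fun t : ℝ => ∫ s in t..(t + 1), ‖g s‖ ^ p) ∧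
      (⨆ t : ℝ, ∫ s in t..(t + 1), ‖f s - g s‖ ^ p) ^ (1 / p) < ε ∧
      ((∀ x, (f x).im = 0) → ∀ x, (g x).im = 0) := by
  obtain ⟨g, g_smooth, g_bdd, fg_lt, g_span⟩ :=
    smooth_dense_in_stepanov_general hp hf_meas hf_loc hf_bdd hε
  exact ⟨g, g_smooth, g_bdd, fg_lt, fun f_real x =>
    (Submodule.span_le (p := LinearMap.ker Complex.imLm)).2
      (Set.range_subset_iff.2 f_real) (g_span x)⟩
end

section
/- Let a, b, s > 0. For ε > 0 define the sector S_{a,b,s,ε} := { λ ∈ ℂ : |Im λ| ≤ 2aε Re λ + 2bε^{−s} }, and let M_{a,b,s} := ⋂_{0 < ε ≤ (2a+1)^{−1}} S_{a,b,s,ε}. Set λ₀ := −(b/a)(2a+1)^{s+1} and λ₁ := (bs/a)(2a+1)^{s+1}. Then M_{a,b,s} is exactly the set { λ ∈ ℂ : λ₀ ≤ Re λ ≤ λ₁ and |Im λ| ≤ (2a/(2a+1)) Re λ + 2b(2a+1)^s } ∪ { λ ∈ ℂ : Re λ > λ₁ and |Im λ| ≤ 2(s+1) b^{1/(s+1)}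 (a/s)^{s/(s+1)} (Re λ)^{s/(s+1)} }. -/
/-!
For fixed `x = Re λ` the bound `ε ↦ 2aεx + 2bε⁻ˢ` is convex on `(0, ∞)`, so membership in the
intersection only has to be tested at its minimizer over `(0, R⁻¹]`, where `R = 2a + 1`. For `x > 0`
the derivative vanishes at `ε⋆ = (ax / (bs)) ^ (-1 / (s + 1))`, and `ε⋆ ≤ R⁻¹` exactly when
`x ≥ λ₁ = (bs/a) R ^ (s + 1)`. Below `λ₁` the minimizer is the endpoint `R⁻¹`, which gives the
sector; above `λ₁` it is `ε⋆`, which gives the curve. The constraint `λ₀ ≤ x` says that the bound at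
`R⁻¹` is nonnegative.
-/

open Set

theorem forall_mem_le_iff_of_isMinOn {α β : Type*} [Preorder β] {f : α → β} {S : Set α} {t : α}
    (ht : t ∈ S) (hmin : IsMinOn f S t) (y : β) : (∀ ε ∈ S, y ≤ f ε) ↔ y ≤ f t :=
  ⟨fun h ↦ h t ht, fun h _ hε ↦ h.trans (hmin hε)⟩

theorem one_add_mul_sub_one_le_rpow_of_nonpos {x r : ℝ} (hx : 0 < x) (hr : r ≤ 0) :
    1 + r * (x - 1) ≤ x ^ r := by
  calc 1 + r * (x - 1) ≤ Real.log x * r + 1 := by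
        linarith [mul_le_mul_of_nonpos_left (Real.log_le_sub_one_of_pos hx) hr]
    _ ≤ Real.exp (Real.log x * r) := Real.add_one_le_exp _
    _ = x ^ r := (Real.rpow_def_of_pos hx r).symm

theorem rpow_neg_add_one_mul_self {e : ℝ} (he : 0 < e) (s : ℝ) :
    e ^ (-(s + 1)) * e = e ^ (-s) := by
  rw [← Real.rpow_add_one he.ne']
  ring_nf

theorem inv_rpow_neg (R r : ℝ) : R⁻¹ ^ (-r) = R ^ r := by
  rw [Real.rpow_neg_eq_inv_rpow, inv_inv]

theorem rpow_neg_tangent_le {s e t : ℝ} (hs : 0 ≤ s) (he : 0 < e) (ht : 0 < t) :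
    e ^ (-s) - s * e ^ (-(s + 1)) * (t - e) ≤ t ^ (-s) := by
  have bernoulli : 1 + -s * (t / e - 1) ≤ (t / e) ^ (-s) :=
    one_add_mul_sub_one_le_rpow_of_nonpos (div_pos ht he) (neg_nonpos.2 hs)
  rw [Real.div_rpow ht.le he.le, le_div_iff₀ (Real.rpow_pos_of_pos he _)] at bernoulli
  refine le_of_eq_of_le ?_ bernoulli
  rw [← rpow_neg_add_one_mul_self he]
  field_simp
  ring

/-- The function `ε ↦ p ε + q ε⁻ˢ`. With `p = a Re λ` and `q = b` it is half of the bound on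
`|Im λ|` that defines the sector `S_{a,b,s,ε}`. -/
noncomputable def sectorProfile (p q s ε : ℝ) : ℝ := p * ε + q * ε ^ (-s)

/-- The zero of the derivative of `sectorProfile p q s` on `(0, ∞)`, for positive `p`, `q`, `s`. -/
noncomputable def criticalPoint (p q s : ℝ) : ℝ := (p / (q * s)) ^ (-(s + 1))⁻¹

section Minimization

variable {p q s e t T y : ℝ}

theorem sectorProfile_le_of_mul_nonneg (hq : 0 ≤ q) (hs : 0 ≤ s) (he : 0 < e) (ht : 0 < t)
    (hslope : 0 ≤ (t - e) * (p - q * s * e ^ (-(s + 1)))) :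
    sectorProfile p q s e ≤ sectorProfile p q s t := by
  have tangent := mul_le_mul_of_nonneg_left (rpow_neg_tangent_le hs he ht) hq
  unfold sectorProfile
  linarith

theorem isMinOn_sectorProfile_right_endpoint (hq : 0 ≤ q) (hs : 0 ≤ s)
    (hp : p ≤ q * s * T ^ (-(s + 1))) : IsMinOn (sectorProfile p q s) (Ioc 0 T) T :=
  fun _ ⟨ht, htT⟩ ↦ sectorProfile_le_of_mul_nonneg hq hs (ht.trans_le htT) ht <|
    mul_nonneg_of_nonpos_of_nonpos (sub_nonpos.2 htT) (sub_nonpos.2 hp)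

theorem criticalPoint_pos (hp : 0 < p) (hq : 0 < q) (hs : 0 < s) : 0 < criticalPoint p q s := by
  unfold criticalPoint
  positivity

theorem mul_criticalPoint_rpow (hp : 0 ≤ p) (hq : 0 < q) (hs : 0 < s) :
    q * s * criticalPoint p q s ^ (-(s + 1)) = p := by
  rw [criticalPoint, Real.rpow_inv_rpow (by positivity) (by linarith)]
  field_simp

theorem criticalPoint_le_iff (hp : 0 < p) (hq : 0 < q) (hs : 0 < s) (hT : 0 < T) :
    criticalPoint p q s ≤ T ↔ q * s * T ^ (-(s + 1)) ≤ p := by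
  rw [criticalPoint, Real.rpow_inv_le_iff_of_neg (by positivity) hT (by linarith),
    le_div_iff₀' (by positivity)]

theorem isMinOn_sectorProfile_criticalPoint (hp : 0 < p) (hq : 0 < q) (hs : 0 < s) :
    IsMinOn (sectorProfile p q s) (Ioi 0) (criticalPoint p q s) := by
  refine fun t ht ↦ sectorProfile_le_of_mul_nonneg hq.le hs.le (criticalPoint_pos hp hq hs) ht ?_
  rw [mul_criticalPoint_rpow hp.le hq hs, sub_self, mul_zero]

theorem mul_div_mul_rpow (hp : 0 ≤ p) (hq : 0 < q) (hs : 0 < s) :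
    q * (p / (q * s)) ^ (s / (s + 1)) = q ^ (1 / (s + 1)) * (p / s) ^ (s / (s + 1)) := by
  have exponents : 1 / (s + 1) = 1 - s / (s + 1) := by
    field_simp
    ring
  rw [exponents, Real.rpow_sub hq, Real.rpow_one, mul_comm q s, ← div_div,
    Real.div_rpow (by positivity) hq.le]
  ring

theorem sectorProfile_criticalPoint (hp : 0 < p) (hq : 0 < q) (hs : 0 < s) :
    sectorProfile p q s (criticalPoint p q s) =
      (s + 1) * q ^ (1 / (s + 1)) * (p / s) ^ (s / (s + 1)) := by
  have he := criticalPoint_pos hp hq hs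
  have criticalPoint_rpow :
      criticalPoint p q s ^ (-s) = (p / (q * s)) ^ (s / (s + 1)) := by
    rw [criticalPoint, ← Real.rpow_mul (by positivity), inv_neg, neg_mul_neg, inv_mul_eq_div]
  calc sectorProfile p q s (criticalPoint p q s)
      = q * s * criticalPoint p q s ^ (-(s + 1)) * criticalPoint p q s +
          q * criticalPoint p q s ^ (-s) := by
        rw [mul_criticalPoint_rpow hp.le hq hs, sectorProfile]
    _ = (s + 1) * (q * criticalPoint p q s ^ (-s)) := by
        rw [mul_assoc, rpow_neg_add_one_mul_self he]
        ring
    _ = (s + 1) * q ^ (1 / (s + 1)) * (p / s) ^ (s / (s + 1)) := by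
        rw [criticalPoint_rpow, mul_div_mul_rpow hp.le hq hs, mul_assoc]

theorem forall_le_sectorProfile_iff_of_le (hq : 0 ≤ q) (hs : 0 ≤ s) (hT : 0 < T)
    (hp : p ≤ q * s * T ^ (-(s + 1))) :
    (∀ ε ∈ Ioc 0 T, y ≤ sectorProfile p q s ε) ↔ y ≤ sectorProfile p q s T :=
  forall_mem_le_iff_of_isMinOn (right_mem_Ioc.2 hT)
    (isMinOn_sectorProfile_right_endpoint hq hs hp) y

theorem forall_le_sectorProfile_iff_of_ge (hq : 0 < q) (hs : 0 < s) (hT : 0 < T)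
    (hp : q * s * T ^ (-(s + 1)) ≤ p) :
    (∀ ε ∈ Ioc 0 T, y ≤ sectorProfile p q s ε) ↔
      y ≤ (s + 1) * q ^ (1 / (s + 1)) * (p / s) ^ (s / (s + 1)) := by
  have hp₀ : 0 < p := lt_of_lt_of_le (by positivity) hp
  rw [← sectorProfile_criticalPoint hp₀ hq hs]
  have mem_Ioc : criticalPoint p q s ∈ Ioc 0 T :=
    ⟨criticalPoint_pos hp₀ hq hs, (criticalPoint_le_iff hp₀ hq hs hT).2 hp⟩
  exact forall_mem_le_iff_of_isMinOn mem_Ioc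
    ((isMinOn_sectorProfile_criticalPoint hp₀ hq hs).on_subset Ioc_subset_Ioi_self) y

end Minimization

section SectorBound

variable {a b s R x y : ℝ}

theorem le_sectorBound_iff (a b s x y ε : ℝ) :
    y ≤ 2 * a * ε * x + 2 * b * ε ^ (-s) ↔ y / 2 ≤ sectorProfile (a * x) b s ε := by
  rw [div_le_iff₀' two_pos, sectorProfile]
  ring_nf

theorem forall_le_sectorBound_iff_of_le (ha : 0 < a) (hb : 0 ≤ b) (hs : 0 ≤ s) (hR : 0 < R)
    (hx : x ≤ b * s / a * R ^ (s + 1)) :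
    (∀ ε ∈ Ioc 0 R⁻¹, y ≤ 2 * a * ε * x + 2 * b * ε ^ (-s)) ↔
      y ≤ 2 * a / R * x + 2 * b * R ^ s := by
  have hp : a * x ≤ b * s * R⁻¹ ^ (-(s + 1)) := by
    rwa [inv_rpow_neg, ← le_div_iff₀' ha, mul_div_right_comm]
  simp only [le_sectorBound_iff]
  rw [forall_le_sectorProfile_iff_of_le hb hs (inv_pos.2 hR) hp, ← le_sectorBound_iff,
    inv_rpow_neg, ← div_eq_mul_inv]

theorem forall_le_sectorBound_iff_of_lt (ha : 0 < a) (hb : 0 < b) (hs : 0 < s) (hR : 0 < R)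
    (hx : b * s / a * R ^ (s + 1) < x) :
    (∀ ε ∈ Ioc 0 R⁻¹, y ≤ 2 * a * ε * x + 2 * b * ε ^ (-s)) ↔
      y ≤ 2 * (s + 1) * b ^ (1 / (s + 1)) * (a / s) ^ (s / (s + 1)) * x ^ (s / (s + 1)) := by
  have hx₀ : 0 < x := lt_trans (by positivity) hx
  have hp : b * s * R⁻¹ ^ (-(s + 1)) ≤ a * x := by
    rw [inv_rpow_neg, ← div_le_iff₀' ha, mul_div_right_comm]
    exact hx.le
  simp only [le_sectorBound_iff]
  rw [forall_le_sectorProfile_iff_of_ge hb hs (inv_pos.2 hR) hp, div_le_iff₀' two_pos,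
    mul_div_right_comm, Real.mul_rpow (by positivity) hx₀.le]
  ring_nf

theorem neg_mul_rpow_le_of_sectorBound_nonneg (ha : 0 < a) (hR : 0 < R)
    (h : 0 ≤ 2 * a / R * x + 2 * b * R ^ s) : -(b / a) * R ^ (s + 1) ≤ x := by
  have factored : 2 * a / R * x + 2 * b * R ^ s = 2 * a / R * (x - -(b / a) * R ^ (s + 1)) := by
    rw [Real.rpow_add_one hR.ne']
    field_simp
    ring
  rw [factored] at h
  exact sub_nonneg.1 (nonneg_of_mul_nonneg_right h (by positivity))

end SectorBound

theorem sector_intersection_description_general (a b s R : ℝ) (ha : 0 < a) (hb : 0 < b)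
    (hs : 0 < s) (hR : 0 < R) :
    (⋂ ε ∈ Set.Ioc (0 : ℝ) R⁻¹, {z : ℂ | |z.im| ≤ 2 * a * ε * z.re + 2 * b * ε ^ (-s)}) =
      {z : ℂ | (-(b / a) * R ^ (s + 1) ≤ z.re ∧ z.re ≤ b * s / a * R ^ (s + 1)) ∧
          |z.im| ≤ 2 * a / R * z.re + 2 * b * R ^ s} ∪
      {z : ℂ | b * s / a * R ^ (s + 1) < z.re ∧
          |z.im| ≤ 2 * (s + 1) * b ^ (1 / (s + 1)) * (a / s) ^ (s / (s + 1)) *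
            z.re ^ (s / (s + 1))} := by
  ext z
  simp only [mem_iInter₂, mem_union, mem_ofPred_eq]
  rcases le_or_gt z.re (b * s / a * R ^ (s + 1)) with hz | hz
  · have left_bound (h : |z.im| ≤ 2 * a / R * z.re + 2 * b * R ^ s) :
        -(b / a) * R ^ (s + 1) ≤ z.re :=
      neg_mul_rpow_le_of_sectorBound_nonneg ha hR ((abs_nonneg _).trans h)
    rw [forall_le_sectorBound_iff_of_le ha hb.le hs.le hR hz]
    simpa only [hz, hz.not_gt, and_true, false_and, or_false]
      using (and_iff_right_of_imp left_bound).symm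
  · rw [forall_le_sectorBound_iff_of_lt ha hb hs hR hz]
    simp only [hz, hz.not_ge, and_false, false_and, true_and, false_or]

/-- Explicit description of the set `M_{a,b,s} = ⋂_{0 < ε ≤ (2a+1)⁻¹} S_{a,b,s,ε}`, where
`S_{a,b,s,ε} = {λ : |Im λ| ≤ 2aε Re λ + 2bε⁻ˢ}`: it is the union of a sector part (for
`λ₀ ≤ Re λ ≤ λ₁`) and a region bounded by the curve `|Im λ| = C (Re λ)^{s/(s+1)}`
(for `Re λ > λ₁`). -/
theorem sector_intersection_description (a b s : ℝ) (ha : 0 < a) (hb : 0 < b) (hs : 0 < s) :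
    (⋂ ε ∈ Set.Ioc (0 : ℝ) ((2 * a + 1)⁻¹),
        {z : ℂ | |z.im| ≤ 2 * a * ε * z.re + 2 * b * ε ^ (-s)}) =
      {z : ℂ | (-(b / a) * (2 * a + 1) ^ (s + 1) ≤ z.re ∧
            z.re ≤ b * s / a * (2 * a + 1) ^ (s + 1)) ∧
          |z.im| ≤ 2 * a / (2 * a + 1) * z.re + 2 * b * (2 * a + 1) ^ s} ∪
      {z : ℂ | b * s / a * (2 * a + 1) ^ (s + 1) < z.re ∧
          |z.im| ≤ 2 * (s + 1) * b ^ (1 / (s + 1)) * (a / s) ^ (s / (s + 1)) *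
            z.re ^ (s / (s + 1))} :=
  sector_intersection_description_general a b s (2 * a + 1) ha hb hs (by positivity)
end

section
/- Let a, b, s > 0, λ₀ := −(b/a)(2a+1)^{s+1}, λ₁ := (bs/a)(2a+1)^{s+1}, and let M_{a,b,s} := { λ ∈ ℂ : λ₀ ≤ Re λ ≤ λ₁ and |Im λ| ≤ (2a/(2a+1)) Re λ + 2b(2a+1)^s } ∪ { λ ∈ ℂ : Re λ > λ₁ and |Im λ| ≤ 2(s+1) b^{1/(s+1)} (a/s)^{s/(s+1)} (Re λ)^{s/(s+1)} }. Then M_{a,b,s} ⊆ { λ ∈ ℂ : |Im λ| ≤ 2(s+1) b^{1/(s+1)} (a/s)^{s/(s+1)} ( Re λ + (b/a)(2a+1)^{s+1} )^{s/(s+1)} }. -/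
/-!
With `T = 2a + 1`, the segment bounding the first part of `M` is the chord from `(x₀, 0)` to
`(x₁, f x₁)`, where `f` is the power function bounding the second part, `x₀ = -(b/a) T^(s+1)` and
`x₁ = (bs/a) T^(s+1)`. Since `f` is increasing and `x₀ ≤ 0`, this chord lies below the one from
`(x₀, 0)` to `(x₁, f (x₁ - x₀))`, which is a chord of the translate `x ↦ f (x - x₀)` and hence lies
below it by concavity. Where `M` is bounded by `f` itself, monotonicity of `f` suffices.
-/

open Set

theorem smul_le_apply_smul_of_concaveOn {𝕜 E β : Type*} [Ring 𝕜] [PartialOrder 𝕜]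
    [IsOrderedRing 𝕜] [AddCommMonoid E] [Module 𝕜 E] [AddCommMonoid β] [PartialOrder β]
    [IsOrderedAddMonoid β] [Module 𝕜 β] [PosSMulMono 𝕜 β] {S : Set E} {f : E → β}
    (hf : ConcaveOn 𝕜 S f) (zero_mem : (0 : E) ∈ S) (hf₀ : 0 ≤ f 0) {x : E} (hx : x ∈ S) {t : 𝕜}
    (ht : t ∈ Icc (0 : 𝕜) 1) : t • f x ≤ f (t • x) := by
  have concave : t • f x + (1 - t) • f 0 ≤ f (t • x + (1 - t) • 0) :=
    hf.2 hx zero_mem ht.1 (sub_nonneg.2 ht.2) (add_sub_cancel t 1)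
  rw [smul_zero, add_zero] at concave
  exact (le_add_of_nonneg_right (smul_nonneg (sub_nonneg.2 ht.2) hf₀)).trans concave

theorem chord_le_apply_sub_of_concaveOn {f : ℝ → ℝ} (hf : ConcaveOn ℝ (Ici 0) f)
    (hmono : MonotoneOn f (Ici 0)) (hf₀ : 0 ≤ f 0) {x₀ x₁ x : ℝ} (hx₀ : x₀ ≤ 0) (hx₁ : 0 < x₁)
    (hx : x ∈ Icc x₀ x₁) : (x - x₀) / (x₁ - x₀) * f x₁ ≤ f (x - x₀) := by
  have width_pos : 0 < x₁ - x₀ := by linarith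
  have ratio_mem : (x - x₀) / (x₁ - x₀) ∈ Icc (0 : ℝ) 1 :=
    ⟨div_nonneg (sub_nonneg.2 hx.1) width_pos.le,
      (div_le_one width_pos).2 (sub_le_sub_right hx.2 x₀)⟩
  calc (x - x₀) / (x₁ - x₀) * f x₁
      ≤ (x - x₀) / (x₁ - x₀) * f (x₁ - x₀) :=
        mul_le_mul_of_nonneg_left (hmono hx₁.le width_pos.le (by linarith)) ratio_mem.1
    _ ≤ f ((x - x₀) / (x₁ - x₀) * (x₁ - x₀)) :=
        smul_le_apply_smul_of_concaveOn hf self_mem_Ici hf₀ width_pos.le ratio_mem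
    _ = f (x - x₀) := by rw [div_mul_cancel₀ _ width_pos.ne']

/-- The bound on `|Im λ|` as a function of `x = Re λ`, meant for `x ≥ 0`; for `s = 1` its graph is
half of a parabola. -/
noncomputable def parabola (a b s x : ℝ) : ℝ :=
  2 * (s + 1) * b ^ (1 / (s + 1)) * (a / s) ^ (s / (s + 1)) * x ^ (s / (s + 1))

section Parabola

variable {a b s T : ℝ}

theorem concaveOn_parabola (ha : 0 ≤ a) (hb : 0 ≤ b) (hs : 0 ≤ s) :
    ConcaveOn ℝ (Ici 0) (parabola a b s) :=
  (Real.concaveOn_rpow (by positivity) (div_le_one_of_le₀ (by linarith) (by positivity))).smul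
    (by positivity)

theorem monotoneOn_parabola (ha : 0 ≤ a) (hb : 0 ≤ b) (hs : 0 ≤ s) :
    MonotoneOn (parabola a b s) (Ici 0) := fun _ hx _ _ hxy ↦
  mul_le_mul_of_nonneg_left (Real.rpow_le_rpow hx hxy (by positivity)) (by positivity)

theorem parabola_nonneg (ha : 0 ≤ a) (hb : 0 ≤ b) (hs : 0 ≤ s) {x : ℝ} (hx : 0 ≤ x) :
    0 ≤ parabola a b s x := by
  unfold parabola
  positivity

theorem parabola_mul_rpow_add_one (ha : 0 < a) (hb : 0 < b) (hs : 0 < s) (hT : 0 ≤ T) :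
    parabola a b s (b * s / a * T ^ (s + 1)) = 2 * (s + 1) * b * T ^ s := by
  have base_eq : a / s * (b * s / a * T ^ (s + 1)) = b * T ^ (s + 1) := by field_simp
  have T_pow : (T ^ (s + 1)) ^ (s / (s + 1)) = T ^ s := by
    rw [← Real.rpow_mul hT, mul_div_cancel₀ s (by positivity)]
  have b_pow : b ^ (1 / (s + 1)) * b ^ (s / (s + 1)) = b := by
    rw [← Real.rpow_add hb, ← add_div, add_comm, div_self (by positivity), Real.rpow_one]
  calc parabola a b s (b * s / a * T ^ (s + 1))
      = 2 * (s + 1) * b ^ (1 / (s + 1)) * (b * T ^ (s + 1)) ^ (s / (s + 1)) := by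
        rw [parabola, mul_assoc _ ((a / s) ^ _), ← Real.mul_rpow (by positivity) (by positivity),
          base_eq]
    _ = 2 * (s + 1) * (b ^ (1 / (s + 1)) * b ^ (s / (s + 1))) * T ^ s := by
        rw [Real.mul_rpow hb.le (by positivity), T_pow]
        ring
    _ = 2 * (s + 1) * b * T ^ s := by rw [b_pow]

theorem line_eq_chord_parabola (ha : 0 < a) (hb : 0 < b) (hs : 0 < s) (hT : 0 < T) (x : ℝ) :
    2 * a / T * x + 2 * b * T ^ s =
      (x - -(b / a) * T ^ (s + 1)) / (b * s / a * T ^ (s + 1) - -(b / a) * T ^ (s + 1)) *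
        parabola a b s (b * s / a * T ^ (s + 1)) := by
  have width_eq : b * s / a * T ^ (s + 1) - -(b / a) * T ^ (s + 1) =
      b * (s + 1) / a * (T ^ s * T) := by
    rw [Real.rpow_add_one hT.ne']
    ring
  rw [parabola_mul_rpow_add_one ha hb hs hT.le, width_eq, Real.rpow_add_one hT.ne']
  field_simp
  ring

theorem line_le_parabola_add (ha : 0 < a) (hb : 0 < b) (hs : 0 < s) (hT : 0 < T) {x : ℝ}
    (hx : x ∈ Icc (-(b / a) * T ^ (s + 1)) (b * s / a * T ^ (s + 1))) :
    2 * a / T * x + 2 * b * T ^ s ≤ parabola a b s (x + b / a * T ^ (s + 1)) := by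
  have left_nonpos : -(b / a) * T ^ (s + 1) ≤ 0 :=
    mul_nonpos_of_nonpos_of_nonneg (neg_nonpos.2 (by positivity)) (by positivity)
  have shift_eq : x - -(b / a) * T ^ (s + 1) = x + b / a * T ^ (s + 1) := by ring
  rw [line_eq_chord_parabola ha hb hs hT, ← shift_eq]
  exact chord_le_apply_sub_of_concaveOn (concaveOn_parabola ha.le hb.le hs.le)
    (monotoneOn_parabola ha.le hb.le hs.le) (parabola_nonneg ha.le hb.le hs.le le_rfl)
    left_nonpos (by positivity) hx

theorem M_subset_parabola_general (ha : 0 < a) (hb : 0 < b) (hs : 0 < s) (hT : 0 < T) :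
    ({z : ℂ | (-(b / a) * T ^ (s + 1) ≤ z.re ∧ z.re ≤ b * s / a * T ^ (s + 1)) ∧
        |z.im| ≤ 2 * a / T * z.re + 2 * b * T ^ s} ∪
     {z : ℂ | b * s / a * T ^ (s + 1) < z.re ∧ |z.im| ≤ parabola a b s z.re}) ⊆
      {z : ℂ | |z.im| ≤ parabola a b s (z.re + b / a * T ^ (s + 1))} := by
  rintro z (⟨re_mem, im_le⟩ | ⟨lt_re, im_le⟩)
  · exact im_le.trans (line_le_parabola_add ha hb hs hT re_mem)
  · have re_nonneg : 0 ≤ z.re := le_trans (by positivity) lt_re.le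
    have shift_nonneg : 0 ≤ b / a * T ^ (s + 1) := by positivity
    exact im_le.trans (monotoneOn_parabola ha.le hb.le hs.le re_nonneg
      (add_nonneg re_nonneg shift_nonneg) (le_add_of_nonneg_right shift_nonneg))

end Parabola

/-- The set `M_{a,b,s}` is contained in the shifted-parabola-type region
`{λ : |Im λ| ≤ 2(s+1) b^{1/(s+1)} (a/s)^{s/(s+1)} (Re λ + (b/a)(2a+1)^{s+1})^{s/(s+1)}}`. -/
theorem M_subset_parabola (a b s : ℝ) (ha : 0 < a) (hb : 0 < b) (hs : 0 < s) :
    ({z : ℂ | (-(b / a) * (2 * a + 1) ^ (s + 1) ≤ z.re ∧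
          z.re ≤ b * s / a * (2 * a + 1) ^ (s + 1)) ∧
        |z.im| ≤ 2 * a / (2 * a + 1) * z.re + 2 * b * (2 * a + 1) ^ s} ∪
     {z : ℂ | b * s / a * (2 * a + 1) ^ (s + 1) < z.re ∧
        |z.im| ≤ 2 * (s + 1) * b ^ (1 / (s + 1)) * (a / s) ^ (s / (s + 1)) *
          z.re ^ (s / (s + 1))}) ⊆
      {z : ℂ | |z.im| ≤ 2 * (s + 1) * b ^ (1 / (s + 1)) * (a / s) ^ (s / (s + 1)) *
        (z.re + b / a * (2 * a + 1) ^ (s + 1)) ^ (s / (s + 1))} :=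
  M_subset_parabola_general ha hb hs (by positivity)
end

section
/- Let Q ∈ L²_loc(ℝ,ℂ), τ ∈ L¹_loc(ℝ,ℂ). Let u, w, v, z : ℝ → ℂ be locally absolutely continuous functions such that a.e. u' = w + Qu and v' = z + conj(Q)·v (so w = u^{[1]} := u' − Qu is the quasi-derivative of u and z = v^{{1}} := v' − conj(Q)v is the adjoint quasi-derivative of v). Define a.e. l[u] := −w' − Q·u' + τ·u and l⁺[v] := −( z' + conj(Q)·z + (conj(Q)² − conj(τ))·v ), and define the bracket [u,v](t) := u(t)·conj(z(t)) − w(t)·conj(v(t)). Then for every finite interval [a,b] on which l[u]·conj(v) and u·conj(l⁺[v]) are integrable: ∫_a^b l[u](x)·conj(v(x)) dx − ∫_a^b u(x)·conj(l⁺[v](x)) dx = [u,v](b) − [u,v](a). -/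
open MeasureTheory Filter Topology

/-- The Shin–Zettl quasi-differential expression `l[u] = -(u^{[1]})' - Q u' + τ u`,
written in terms of the quasi-derivative `w = u^{[1]} = u' - Qu` (so that `u' = w + Qu`)
and the a.e. derivative `dw` of `w`. -/
noncomputable def qdL (Q τ u w dw : ℝ → ℂ) (x : ℝ) : ℂ :=
  -dw x - Q x * (w x + Q x * u x) + τ x * u x

/-- The formally adjoint quasi-differential expression
`l⁺[v] = -( (v^{{1}})' + conj(Q) v^{{1}} + (conj(Q)² - conj(τ)) v )`, written in terms of
the adjoint quasi-derivative `z = v^{{1}} = v' - conj(Q)v` and the a.e. derivative `dz`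
of `z`. -/
noncomputable def qdLplus (Q τ v z dz : ℝ → ℂ) (x : ℝ) : ℂ :=
  -(dz x + (starRingEnd ℂ) (Q x) * z x
      + (((starRingEnd ℂ) (Q x)) ^ 2 - (starRingEnd ℂ) (τ x)) * v x)

/-- The bracket `[u,v](t) = u(t) conj(v^{{1}}(t)) - u^{[1]}(t) conj(v(t))`. -/
noncomputable def qdBracket (u w v z : ℝ → ℂ) (t : ℝ) : ℂ :=
  u t * (starRingEnd ℂ) (z t) - w t * (starRingEnd ℂ) (v t)

/-
By the product rule, `[u, v]` is absolutely continuous with a.e. derivative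
`u' conj(z) + u conj(z') - w' conj(v) - w conj(v')`. Substituting `u' = w + Q u` and
`v' = z + conj(Q) v` turns this into `l[u] conj(v) - u conj(l⁺[v])`, in which the terms with `τ` and
`Q²` cancel. The fundamental theorem of calculus for absolutely continuous functions then gives the
identity.
-/

section AbsolutelyContinuous

variable {X Y : Type*} [PseudoMetricSpace X] [PseudoMetricSpace Y] {a b : ℝ}

theorem absolutelyContinuousOnInterval_of_dist_le_mul {f : ℝ → X} {g : ℝ → Y} {K : ℝ}
    (hg : AbsolutelyContinuousOnInterval g a b)
    (hfg : ∀ x ∈ Set.uIcc a b, ∀ y ∈ Set.uIcc a b, dist (f x) (f y) ≤ K * dist (g x) (g y)) :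
    AbsolutelyContinuousOnInterval f a b := by
  have hKg := Tendsto.const_mul K hg
  rw [mul_zero] at hKg
  refine squeeze_zero' (Eventually.of_forall fun _ ↦ Finset.sum_nonneg fun _ _ ↦ dist_nonneg) ?_ hKg
  filter_upwards [mem_inf_of_right (mem_principal_self _)] with I hI
  rw [Finset.mul_sum]
  exact Finset.sum_le_sum fun i hi ↦ hfg _ (hI.1 i hi).1 _ (hI.1 i hi).2

theorem absolutelyContinuousOnInterval_integral {E : Type*} [NormedAddCommGroup E]
    [NormedSpace ℝ E] {f : ℝ → E} {c : ℝ} (hf : IntervalIntegrable f volume a b)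
    (hc : c ∈ Set.uIcc a b) :
    AbsolutelyContinuousOnInterval (fun x ↦ ∫ s in c..x, f s) a b := by
  have hf_from {x : ℝ} (hx : x ∈ Set.uIcc a b) : IntervalIntegrable f volume c x :=
    hf.mono_set (Set.uIcc_subset_uIcc hc hx)
  refine absolutelyContinuousOnInterval_of_dist_le_mul (K := 1)
    (hf.norm.absolutelyContinuousOnInterval_intervalIntegral hc) fun x hx y hy ↦ ?_
  rw [one_mul, dist_eq_norm, Real.dist_eq,
    intervalIntegral.integral_interval_sub_left (hf_from hx) (hf_from hy),
    intervalIntegral.integral_interval_sub_left (hf_from hx).norm (hf_from hy).norm]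
  exact intervalIntegral.norm_integral_le_abs_integral_norm

end AbsolutelyContinuous

/-- `F` is absolutely continuous on the unordered interval between `a` and `b`, with derivative `f`
almost everywhere there. For functions into `ℂ` this says that `F` is an indefinite Lebesgue
integral of `f`; the derivative is carried along as data so that the product rule and the
fundamental theorem of calculus need no `deriv`. -/
structure HasACDeriv {E : Type*} [NormedAddCommGroup E] [NormedSpace ℝ E]
    (F f : ℝ → E) (a b : ℝ) : Prop where
  absolutelyContinuousOnInterval : AbsolutelyContinuousOnInterval F a b
  ae_hasDerivAt : ∀ᵐ x, x ∈ Set.uIcc a b → HasDerivAt F (f x) x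

namespace HasACDeriv

variable {E : Type*} [NormedAddCommGroup E] [NormedSpace ℝ E] {F G f g : ℝ → E} {a b : ℝ}

theorem const_add (C : E) (hF : HasACDeriv F f a b) : HasACDeriv (fun x ↦ C + F x) f a b where
  absolutelyContinuousOnInterval :=
    absolutelyContinuousOnInterval_of_dist_le_mul (K := 1) hF.absolutelyContinuousOnInterval
      fun x _ y _ ↦ by rw [dist_add_left, one_mul]
  ae_hasDerivAt := hF.ae_hasDerivAt.mono fun _ hFx hx ↦ (hFx hx).const_add C

theorem sub (hF : HasACDeriv F f a b) (hG : HasACDeriv G g a b) :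
    HasACDeriv (fun x ↦ F x - G x) (fun x ↦ f x - g x) a b where
  absolutelyContinuousOnInterval :=
    hF.absolutelyContinuousOnInterval.sub hG.absolutelyContinuousOnInterval
  ae_hasDerivAt := by
    filter_upwards [hF.ae_hasDerivAt, hG.ae_hasDerivAt] with x hFx hGx hx
    exact (hFx hx).sub (hGx hx)

theorem mul {A : Type*} [NormedRing A] [NormMulClass A] [NormedAlgebra ℝ A] {F G f g : ℝ → A}
    (hF : HasACDeriv F f a b) (hG : HasACDeriv G g a b) :
    HasACDeriv (fun x ↦ F x * G x) (fun x ↦ f x * G x + F x * g x) a b where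
  absolutelyContinuousOnInterval :=
    hF.absolutelyContinuousOnInterval.smul hG.absolutelyContinuousOnInterval
  ae_hasDerivAt := by
    filter_upwards [hF.ae_hasDerivAt, hG.ae_hasDerivAt] with x hFx hGx hx
    exact (hFx hx).mul (hGx hx)

theorem continuousLinearMap_comp {E' : Type*} [NormedAddCommGroup E'] [NormedSpace ℝ E']
    (L : E →L[ℝ] E') (hF : HasACDeriv F f a b) :
    HasACDeriv (fun x ↦ L (F x)) (fun x ↦ L (f x)) a b where
  absolutelyContinuousOnInterval :=
    absolutelyContinuousOnInterval_of_dist_le_mul hF.absolutelyContinuousOnInterval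
      fun x _ y _ ↦ L.dist_le_opNorm (F x) (F y)
  ae_hasDerivAt := hF.ae_hasDerivAt.mono fun x hFx hx ↦ L.hasFDerivAt.comp_hasDerivAt x (hFx hx)

theorem conj {F f : ℝ → ℂ} (hF : HasACDeriv F f a b) :
    HasACDeriv (fun x ↦ (starRingEnd ℂ) (F x)) (fun x ↦ (starRingEnd ℂ) (f x)) a b :=
  hF.continuousLinearMap_comp Complex.conjCLE.toContinuousLinearMap

variable [CompleteSpace E]

theorem integral {c : ℝ} (hf : IntervalIntegrable f volume a b) (hc : c ∈ Set.uIcc a b) :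
    HasACDeriv (fun x ↦ ∫ s in c..x, f s) f a b where
  absolutelyContinuousOnInterval := absolutelyContinuousOnInterval_integral hf hc
  ae_hasDerivAt := hf.ae_hasDerivAt_integral.mono fun _ hfx hx ↦ hfx hx c hc

theorem of_eq_add_integral {c : ℝ} (hf : LocallyIntegrable f volume)
    (hF : ∀ x, F x = F c + ∫ s in c..x, f s) (a b : ℝ) : HasACDeriv F f a b := by
  have hfi (x y : ℝ) : IntervalIntegrable f volume x y :=
    (hf.integrableOn_isCompact isCompact_uIcc).intervalIntegrable
  have hFa : F = fun x ↦ F a + ∫ s in a..x, f s := by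
    funext x
    rw [hF x, hF a, add_assoc, intervalIntegral.integral_add_adjacent_intervals (hfi c a) (hfi a x)]
  rw [hFa]
  exact (HasACDeriv.integral (hfi a b) Set.left_mem_uIcc).const_add (F a)

theorem integral_eq_sub (hF : HasACDeriv F f a b) (hf : IntervalIntegrable f volume a b) :
    ∫ x in a..b, f x = F b - F a := by
  have hdiff := hF.sub (HasACDeriv.integral hf Set.left_mem_uIcc)
  simp only [sub_self] at hdiff
  obtain ⟨C, hC⟩ :=
    hdiff.absolutelyContinuousOnInterval.const_of_ae_hasDerivAt_zero hdiff.ae_hasDerivAt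
  have hab := (hC a Set.left_mem_uIcc).trans (hC b Set.right_mem_uIcc).symm
  rw [intervalIntegral.integral_same, sub_zero] at hab
  rw [hab, sub_sub_cancel]

end HasACDeriv

section Lagrange

variable {Q τ u w v z dw dz : ℝ → ℂ} {a b : ℝ}

theorem hasACDeriv_qdBracket
    (hu : HasACDeriv u (fun x ↦ w x + Q x * u x) a b)
    (hv : HasACDeriv v (fun x ↦ z x + (starRingEnd ℂ) (Q x) * v x) a b)
    (hw : HasACDeriv w dw a b) (hz : HasACDeriv z dz a b) :
    HasACDeriv (qdBracket u w v z)
      (fun x ↦ qdL Q τ u w dw x * (starRingEnd ℂ) (v x)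
        - u x * (starRingEnd ℂ) (qdLplus Q τ v z dz x)) a b := by
  convert! (hu.mul hz.conj).sub (hw.mul hv.conj) using 2
  simp only [qdL, qdLplus, map_add, map_neg, map_mul, map_sub, map_pow, Complex.conj_conj]
  ring

theorem lagrange_identity_interval_general
    (hu : HasACDeriv u (fun x ↦ w x + Q x * u x) a b)
    (hv : HasACDeriv v (fun x ↦ z x + (starRingEnd ℂ) (Q x) * v x) a b)
    (hw : HasACDeriv w dw a b) (hz : HasACDeriv z dz a b)
    (hlu : IntervalIntegrable (fun x ↦ qdL Q τ u w dw x * (starRingEnd ℂ) (v x)) volume a b)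
    (hlv : IntervalIntegrable
      (fun x ↦ u x * (starRingEnd ℂ) (qdLplus Q τ v z dz x)) volume a b) :
    (∫ x in a..b, qdL Q τ u w dw x * (starRingEnd ℂ) (v x))
        - (∫ x in a..b, u x * (starRingEnd ℂ) (qdLplus Q τ v z dz x))
      = qdBracket u w v z b - qdBracket u w v z a := by
  rw [← intervalIntegral.integral_sub hlu hlv]
  exact (hasACDeriv_qdBracket hu hv hw hz).integral_eq_sub (hlu.sub hlv)

end Lagrange

/-- Lagrange identity on a finite interval `[a,b]` for the quasi-differential expressions
`l` and `l⁺`: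
`∫_a^b l[u] conj(v) - ∫_a^b u conj(l⁺[v]) = [u,v](b) - [u,v](a)`. -/
theorem lagrange_identity_interval (Q τ u w v z dw dz : ℝ → ℂ)
    (hQmeas : AEStronglyMeasurable Q volume)
    (hQ : LocallyIntegrable (fun s => ‖Q s‖ ^ 2) volume)
    (hτ : LocallyIntegrable τ volume)
    (hu' : LocallyIntegrable (fun s => w s + Q s * u s) volume)
    (hu : ∀ x : ℝ, u x = u 0 + ∫ s in (0:ℝ)..x, (w s + Q s * u s))
    (hv' : LocallyIntegrable (fun s => z s + (starRingEnd ℂ) (Q s) * v s) volume)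
    (hv : ∀ x : ℝ, v x = v 0 + ∫ s in (0:ℝ)..x, (z s + (starRingEnd ℂ) (Q s) * v s))
    (hdw : LocallyIntegrable dw volume)
    (hw : ∀ x : ℝ, w x = w 0 + ∫ s in (0:ℝ)..x, dw s)
    (hdz : LocallyIntegrable dz volume)
    (hz : ∀ x : ℝ, z x = z 0 + ∫ s in (0:ℝ)..x, dz s)
    (a b : ℝ)
    (hint1 : IntervalIntegrable (fun x => qdL Q τ u w dw x * (starRingEnd ℂ) (v x)) volume a b)
    (hint2 : IntervalIntegrable
      (fun x => u x * (starRingEnd ℂ) (qdLplus Q τ v z dz x)) volume a b) :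
    (∫ x in a..b, qdL Q τ u w dw x * (starRingEnd ℂ) (v x))
        - (∫ x in a..b, u x * (starRingEnd ℂ) (qdLplus Q τ v z dz x))
      = qdBracket u w v z b - qdBracket u w v z a := by
  exact lagrange_identity_interval_general (.of_eq_add_integral hu' hu a b)
    (.of_eq_add_integral hv' hv a b) (.of_eq_add_integral hdw hw a b)
    (.of_eq_add_integral hdz hz a b) hint1 hint2
end
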